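/- For every rooted PTC instance and every feasible fractional solution x of its canonical LP relaxation, there exist a partition E = E_1 ∪ … ∪ E_p of the edge set of T into edge sets of paths and nonnegative vectors x^(1),…,x^(p) ∈ ℝ^S such that for every i ∈ {1,…,p} and every edge e ∈ E_i, Σ_{j covers e} x^(i)_j ≥ 1, and Σ_{i=1}^p Σ_{j∈S} x^(i)_j ≤ 3·Σ_{j∈S} x_j. -/

import Mathlib

/-! The tree is cut at its branching vertices. Two edges (identified with their lower
endpoints) lie in the same piece iff the same leaves lie below them; a piece is a vertical path,
being an interval of the ancestor order. A segment covering an edge of a piece `K` has its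
lower end `u j` in `K`, or its upper end `v j` in `K`, or it runs through all of `K`
(`covers_cases`). Segments of the first two kinds are kept with their full weight, which costs
at most `2 ∑ x` in total. Those of the third kind differ, on `K`, only in their supply, so they
may be truncated greedily to total weight `1`, keeping the highest supplies
(`exists_truncation`).

A piece containing a leaf has no segment running through from below, so the truncated part is
paid only by the pieces without a leaf. The lowest vertex of such a piece has at least two
children, so there are at most as many of these pieces as leaves (`card_branch_le`). Finally,
the edges at the leaves are covered by disjoint sets of segments, so the number of leaves is at
most `∑ x`. This gives the factor `3`. -/

/-- `OnChain parent x w`: vertex `w` lies on the chain from `x` up to the root of a rooted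
tree given by its parent map (i.e. `w` is obtained from `x` by iterating `parent`). -/
def OnChain {V : Type*} (parent : V → V) (x w : V) : Prop :=
  ∃ k : ℕ, parent^[k] x = w

/-- In a rooted tree given by a parent map with root `root`, each edge is identified with
its lower endpoint, a vertex `≠ root`. Segment `j` runs from `u j` up to its ancestor `v j`
and has priority supply `sup j`; it covers edge `e` (of priority demand `dem e`) iff `e`
lies on the `u j`–`v j` path and `sup j ≥ dem e`. -/
def TreeCovers {V ι : Type*} {root : V} (parent : V → V) (u v : ι → V) (sup : ι → ℕ)
    (dem : {w : V // w ≠ root} → ℕ) (j : ι) (e : {w : V // w ≠ root}) : Prop :=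
  OnChain parent (u j) e.1 ∧ ¬ OnChain parent (v j) e.1 ∧ dem e ≤ sup j

/-- `P` is the edge set of a path in the tree: the symmetric difference of the root-chains
of two vertices `x` and `y` (the edge set of the unique `x`–`y` path). -/
def IsPathEdgeSet {V : Type*} (parent : V → V) (root : V)
    (P : Set {w : V // w ≠ root}) : Prop :=
  ∃ x y : V, P = {e | (OnChain parent x e.1 ∧ ¬ OnChain parent y e.1) ∨
                      (OnChain parent y e.1 ∧ ¬ OnChain parent x e.1)}

open scoped Classical

/-! ### The ancestor order -/

section Order

variable {V : Type*} {root : V} {parent : V → V}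

lemma OnChain.refl (a : V) : OnChain parent a a := ⟨0, rfl⟩

lemma onChain_parent (a : V) : OnChain parent a (parent a) := ⟨1, rfl⟩

lemma OnChain.trans {a b c : V} (h : OnChain parent a b) (h' : OnChain parent b c) :
    OnChain parent a c := by
  obtain ⟨k, rfl⟩ := h
  obtain ⟨l, rfl⟩ := h'
  exact ⟨l + k, Function.iterate_add_apply _ _ _ _⟩

/-- Going one step up from `a` either does nothing or passes through `parent a`. -/
lemma OnChain.eq_or {a b : V} (h : OnChain parent a b) : a = b ∨ OnChain parent (parent a) b := by
  obtain ⟨k, rfl⟩ := h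
  cases k with
  | zero => exact Or.inl rfl
  | succ k => exact Or.inr ⟨k, rfl⟩

/-- The ancestors of a vertex are linearly ordered. -/
lemma OnChain.total {a b c : V} (h : OnChain parent a b) (h' : OnChain parent a c) :
    OnChain parent b c ∨ OnChain parent c b := by
  obtain ⟨k, rfl⟩ := h
  obtain ⟨l, rfl⟩ := h'
  rcases le_total k l with hkl | hkl
  · left
    exact ⟨l - k, by rw [← Function.iterate_add_apply, Nat.sub_add_cancel hkl]⟩
  · right
    exact ⟨k - l, by rw [← Function.iterate_add_apply, Nat.sub_add_cancel hkl]⟩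

lemma eq_root_of_onChain_root (hroot : parent root = root) {a : V}
    (h : OnChain parent root a) : a = root := by
  obtain ⟨k, rfl⟩ := h
  exact Function.iterate_fixed hroot k

/-- The root is the only vertex on a cycle of the parent map. -/
lemma eq_root_of_cycle (hroot : parent root = root) (hreach : ∀ w : V, OnChain parent w root)
    {a : V} (h : OnChain parent (parent a) a) : a = root := by
  obtain ⟨k, hk⟩ := h
  obtain ⟨m, hm⟩ := hreach a
  have hper : (parent^[k + 1])^[m] a = a := Function.iterate_fixed hk m
  rw [← Function.iterate_mul, add_mul, one_mul, Function.iterate_add_apply, hm,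
    Function.iterate_fixed hroot] at hper
  exact hper.symm

lemma OnChain.antisymm (hroot : parent root = root) (hreach : ∀ w : V, OnChain parent w root)
    {a b : V} (h : OnChain parent a b) (h' : OnChain parent b a) : a = b := by
  rcases h.eq_or with h1 | h1
  · exact h1
  · have ha := eq_root_of_cycle hroot hreach (h1.trans h')
    subst ha
    exact (eq_root_of_onChain_root hroot h).symm

/-- The ancestor order of the tree, with the root on top. -/
abbrev chainOrder (hroot : parent root = root) (hreach : ∀ w : V, OnChain parent w root) :
    PartialOrder V where
  le := OnChain parent
  le_refl := OnChain.refl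
  le_trans _ _ _ := OnChain.trans
  le_antisymm _ _ := OnChain.antisymm hroot hreach

lemma exists_lowest [Finite V] (hroot : parent root = root)
    (hreach : ∀ w : V, OnChain parent w root) (K : Set V) (hK : K.Nonempty) :
    ∃ b ∈ K, ∀ a ∈ K, OnChain parent a b → a = b := by
  let _ := chainOrder hroot hreach
  obtain ⟨b, hb⟩ := K.toFinite.exists_minimal hK
  exact ⟨b, hb.1, fun a ha hab => le_antisymm hab (hb.2 ha hab)⟩

lemma exists_highest [Finite V] (hroot : parent root = root)
    (hreach : ∀ w : V, OnChain parent w root) (K : Set V) (hK : K.Nonempty) :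
    ∃ b ∈ K, ∀ a ∈ K, OnChain parent b a → a = b := by
  let _ := chainOrder hroot hreach
  obtain ⟨b, hb⟩ := K.toFinite.exists_maximal hK
  exact ⟨b, hb.1, fun a ha hab => le_antisymm (hb.2 ha hab) hab⟩

end Order

/-! ### Pieces: vertices with the same leaves below them -/

section Leaves

variable {V : Type*}

/-- A leaf: a non-root vertex with no proper descendants. -/
def IsLeaf (parent : V → V) (root l : V) : Prop :=
  l ≠ root ∧ ∀ a, OnChain parent a l → a = l

/-- The set of leaves below (or equal to) `w`. The pieces of the decomposition are the fibres
of this map on the edges. -/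
def leavesBelow (parent : V → V) (root w : V) : Set V :=
  {l | IsLeaf parent root l ∧ OnChain parent l w}

variable {root : V} {parent : V → V}

lemma leavesBelow_mono {a b : V} (h : OnChain parent a b) :
    leavesBelow parent root a ⊆ leavesBelow parent root b :=
  fun _ hl => ⟨hl.1, hl.2.trans h⟩

lemma leavesBelow_between {a b c : V} (hab : OnChain parent a b) (hbc : OnChain parent b c)
    (h : leavesBelow parent root a = leavesBelow parent root c) :
    leavesBelow parent root b = leavesBelow parent root c :=
  (leavesBelow_mono hbc).antisymm (h ▸ leavesBelow_mono hab)

lemma exists_leaf_below [Finite V] (hroot : parent root = root)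
    (hreach : ∀ w : V, OnChain parent w root) {w : V} (hw : w ≠ root) :
    ∃ l, l ∈ leavesBelow parent root w := by
  obtain ⟨b, hb, hmin⟩ := exists_lowest hroot hreach {a | OnChain parent a w} ⟨w, .refl w⟩
  refine ⟨b, ⟨?_, fun a ha => hmin a (ha.trans hb) ha⟩, hb⟩
  rintro rfl
  exact hw (eq_root_of_onChain_root hroot hb)

/-- Vertices of the same piece are comparable, having a common leaf below them. -/
lemma comparable_of_leavesBelow_eq [Finite V] (hroot : parent root = root)
    (hreach : ∀ w : V, OnChain parent w root) {a b : V} (ha : a ≠ root)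
    (h : leavesBelow parent root a = leavesBelow parent root b) :
    OnChain parent a b ∨ OnChain parent b a := by
  obtain ⟨l, hl⟩ := exists_leaf_below hroot hreach ha
  exact hl.2.total (h ▸ hl).2

lemma exists_bottom [Finite V] (hroot : parent root = root)
    (hreach : ∀ w : V, OnChain parent w root) {e : V} (he : e ≠ root) :
    ∃ b, b ≠ root ∧ leavesBelow parent root b = leavesBelow parent root e ∧
      ∀ a, a ≠ root → leavesBelow parent root a = leavesBelow parent root e →
        OnChain parent b a := by
  obtain ⟨b, hb, hmin⟩ := exists_lowest hroot hreach
    {a | a ≠ root ∧ leavesBelow parent root a = leavesBelow parent root e} ⟨e, he, rfl⟩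
  refine ⟨b, hb.1, hb.2, fun a ha hae => ?_⟩
  rcases comparable_of_leavesBelow_eq hroot hreach ha (hae.trans hb.2.symm) with h | h
  · rw [hmin a ⟨ha, hae⟩ h]
    exact .refl b
  · exact h

lemma exists_top [Finite V] (hroot : parent root = root)
    (hreach : ∀ w : V, OnChain parent w root) {e : V} (he : e ≠ root) :
    ∃ t, t ≠ root ∧ leavesBelow parent root t = leavesBelow parent root e ∧
      ∀ a, a ≠ root → leavesBelow parent root a = leavesBelow parent root e →
        OnChain parent a t := by
  obtain ⟨t, ht, hmax⟩ := exists_highest hroot hreach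
    {a | a ≠ root ∧ leavesBelow parent root a = leavesBelow parent root e} ⟨e, he, rfl⟩
  refine ⟨t, ht.1, ht.2, fun a ha hae => ?_⟩
  rcases comparable_of_leavesBelow_eq hroot hreach ha (hae.trans ht.2.symm) with h | h
  · exact h
  · rw [hmax a ⟨ha, hae⟩ h]
    exact .refl t

/-- A piece is the path from its lowest vertex to the parent of its highest vertex. -/
lemma isPathEdgeSet_piece [Finite V] (hroot : parent root = root)
    (hreach : ∀ w : V, OnChain parent w root) {e : V} (he : e ≠ root) :
    IsPathEdgeSet parent root
      {f | leavesBelow parent root f.1 = leavesBelow parent root e} := by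
  obtain ⟨b, hb, hbe, hbot⟩ := exists_bottom hroot hreach he
  obtain ⟨t, ht, hte, htop⟩ := exists_top hroot hreach he
  have hbt : OnChain parent b t := hbot t ht hte
  refine ⟨b, parent t, ?_⟩
  ext f
  constructor
  · intro hf
    refine Or.inl ⟨hbot f f.2 hf, fun h => ht ?_⟩
    exact eq_root_of_cycle hroot hreach (h.trans (htop f f.2 hf))
  · rintro (⟨h1, h2⟩ | ⟨h1, h2⟩)
    · have hft : OnChain parent f.1 t := by
        rcases h1.total hbt with h | h
        · exact h
        · rcases h.eq_or with h' | h'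
          · rw [← h']
            exact .refl t
          · exact absurd h' h2
      exact (leavesBelow_between h1 hft (hbe.trans hte.symm)).trans hte
    · exact absurd (hbt.trans ((onChain_parent t).trans h1)) h2

/-- A segment `a`–`c` containing an edge `e` of a piece ends in that piece at one of its two
ends, or contains every edge `f` of the piece. -/
lemma covers_cases [Finite V] (hroot : parent root = root)
    (hreach : ∀ w : V, OnChain parent w root) {a c e : V} (hac : OnChain parent a c)
    (he : e ≠ root) (hae : OnChain parent a e) (hce : ¬ OnChain parent c e)
    (hu : leavesBelow parent root a ≠ leavesBelow parent root e)
    (hv : leavesBelow parent root c ≠ leavesBelow parent root e) {f : V} (hf : f ≠ root)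
    (hfe : leavesBelow parent root f = leavesBelow parent root e) :
    OnChain parent a f ∧ ¬ OnChain parent c f := by
  have ha : a ≠ root := by
    rintro rfl
    exact he (eq_root_of_onChain_root hroot hae)
  constructor
  · -- A leaf below `a` lies below both `e` and `f`, so `a` and `f` are comparable; if `f` were
    -- below `a`, then `a` would lie between `f` and `e`, hence in the piece.
    obtain ⟨l, hl⟩ := exists_leaf_below hroot hreach ha
    have hlf : l ∈ leavesBelow parent root f := hfe ▸ leavesBelow_mono hae hl
    rcases hl.2.total hlf.2 with h | h
    · exact h
    · exact absurd (leavesBelow_between h hae hfe) hu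
  · intro hcf
    rcases hac.total hae with h | h
    · exact hce h
    · exact hv ((leavesBelow_between h hcf hfe.symm).trans hfe)

/-! ### Counting leaves and pieces without a leaf -/

/-- Every non-root vertex being the child of one vertex, `∑ (number of children)` over all
vertices is the number of non-root vertices. Hence there are at least as many leaves as
non-root vertices with two or more children. -/
lemma card_branch_le [Fintype V] (hroot : parent root = root) :
    (Finset.univ.filter fun w : V => w ≠ root ∧
      2 ≤ (Finset.univ.filter fun a : V => a ≠ root ∧ parent a = w).card).card ≤
    (Finset.univ.filter fun l : V => IsLeaf parent root l).card := by
  set c : V → ℕ := fun w => (Finset.univ.filter fun a : V => a ≠ root ∧ parent a = w).card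
    with hc
  set N : Finset V := Finset.univ.filter fun w : V => w ≠ root with hN
  have hsum : N.card = ∑ w, c w := by
    rw [Finset.card_eq_sum_card_fiberwise (f := parent) (t := Finset.univ) (fun _ _ => by simp)]
    refine Finset.sum_congr rfl fun w _ => ?_
    simp only [hc, hN, Finset.filter_filter]
  have hsub : ∑ w ∈ N, c w ≤ ∑ w, c w :=
    Finset.sum_le_sum_of_subset (Finset.subset_univ N)
  have hleaf : ∀ w, w ≠ root → c w = 0 → IsLeaf parent root w := by
    intro w hw h0
    refine ⟨hw, ?_⟩
    rintro a ⟨k, hk⟩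
    cases k with
    | zero => exact hk
    | succ k =>
      rw [Function.iterate_succ_apply'] at hk
      have hmem : parent^[k] a ∈
          Finset.univ.filter fun a : V => a ≠ root ∧ parent a = w := by
        refine Finset.mem_filter.2 ⟨Finset.mem_univ _, fun h => hw ?_, hk⟩
        rw [← hk, h, hroot]
      rw [Finset.card_eq_zero.1 h0] at hmem
      simp at hmem
  have hpt : ∀ w ∈ N, 1 + (if 2 ≤ c w then 1 else 0) ≤
      c w + (if IsLeaf parent root w then 1 else 0) := by
    intro w hw
    have hw' : w ≠ root := (Finset.mem_filter.1 hw).2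
    by_cases h0 : c w = 0
    · simp [h0, hleaf w hw' h0]
    · split_ifs <;> omega
  have htot := Finset.sum_le_sum hpt
  rw [Finset.sum_add_distrib, Finset.sum_add_distrib, ← Finset.card_filter,
    ← Finset.card_filter, Finset.sum_const, smul_eq_mul, mul_one] at htot
  have h1 : N.filter (fun w => 2 ≤ c w) =
      Finset.univ.filter fun w : V => w ≠ root ∧ 2 ≤ c w := by
    rw [hN, Finset.filter_filter]
  have h2 : (N.filter fun w => IsLeaf parent root w).card ≤
      (Finset.univ.filter fun l : V => IsLeaf parent root l).card :=
    Finset.card_le_card (Finset.filter_subset_filter _ (Finset.subset_univ N))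
  rw [h1] at htot
  change (Finset.univ.filter fun w : V => w ≠ root ∧ 2 ≤ c w).card ≤ _
  omega

/-- The lowest vertex of a piece without a leaf has at least two children: an only child would
have the same leaves below it. -/
lemma two_le_children [Fintype V] (hroot : parent root = root)
    (hreach : ∀ w : V, OnChain parent w root) {b : V} (hb : b ≠ root)
    (hnl : ¬ IsLeaf parent root b)
    (hbot : ∀ a, a ≠ root → leavesBelow parent root a = leavesBelow parent root b →
        OnChain parent b a) :
    2 ≤ (Finset.univ.filter fun a : V => a ≠ root ∧ parent a = b).card := by
  -- Every vertex strictly below `b` is below a child of `b`.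
  have hchild : ∀ a, OnChain parent a b → a ≠ b →
      ∃ d, d ≠ root ∧ parent d = b ∧ OnChain parent a d := by
    rintro a ⟨k, hk⟩ hab
    cases k with
    | zero => exact absurd hk hab
    | succ k =>
      rw [Function.iterate_succ_apply'] at hk
      refine ⟨parent^[k] a, fun h => hb ?_, hk, k, rfl⟩
      rw [← hk, h, hroot]
  obtain ⟨a, hab, hne⟩ : ∃ a, OnChain parent a b ∧ a ≠ b := by
    by_contra! h
    exact hnl ⟨hb, h⟩
  obtain ⟨d, hd, hdb, -⟩ := hchild a hab hne
  have hd_le : OnChain parent d b := hdb ▸ onChain_parent d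
  by_contra! hlt
  have honly : ∀ d', d' ≠ root → parent d' = b → d' = d := fun d' h1 h2 =>
    Finset.card_le_one.1 (Nat.lt_succ_iff.1 hlt) d' (by simp [h1, h2]) d (by simp [hd, hdb])
  have heq : leavesBelow parent root d = leavesBelow parent root b := by
    refine (leavesBelow_mono hd_le).antisymm fun l hl => ⟨hl.1, ?_⟩
    obtain ⟨d', h1, h2, h3⟩ := hchild l hl.2 (fun h => hnl (h ▸ hl.1))
    exact honly d' h1 h2 ▸ h3
  have hcyc : OnChain parent (parent d) d := hdb.symm ▸ hbot d hd heq
  exact hd (eq_root_of_cycle hroot hreach hcyc)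

/-- At most as many pieces contain no leaf as there are leaves. -/
lemma card_internal_le [Fintype V] (hroot : parent root = root)
    (hreach : ∀ w : V, OnChain parent w root)
    [Fintype (Set.range fun e : {w : V // w ≠ root} => leavesBelow parent root e.1)] :
    (Finset.univ.filter
      fun A : Set.range fun e : {w : V // w ≠ root} => leavesBelow parent root e.1 =>
        ∀ l, IsLeaf parent root l → leavesBelow parent root l ≠ A.1).card ≤
    (Finset.univ.filter fun l : V => IsLeaf parent root l).card := by
  refine le_trans ?_ (card_branch_le hroot)
  have hex : ∀ A : Set.range fun e : {w : V // w ≠ root} => leavesBelow parent root e.1,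
      ∃ b, b ≠ root ∧ leavesBelow parent root b = A.1 ∧
        ∀ a, a ≠ root → leavesBelow parent root a = A.1 → OnChain parent b a := by
    rintro ⟨_, e, rfl⟩
    exact exists_bottom hroot hreach e.2
  choose b hb hbA hbot using hex
  refine Finset.card_le_card_of_injOn b ?_ ?_
  · intro A hA
    have hA' := (Finset.mem_filter.1 hA).2
    refine Finset.mem_coe.2 (Finset.mem_filter.2 ⟨Finset.mem_univ _, hb A, ?_⟩)
    refine two_le_children hroot hreach (hb A) (fun h => hA' _ h (hbA A)) fun a ha h => ?_
    exact hbot A a ha (h.trans (hbA A))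
  · intro A _ B _ h
    exact Subtype.ext (by rw [← hbA A, ← hbA B, h])

end Leaves

/-! ### Truncating and charging weights -/

/-- Greedy truncation of a weight `x` on `T` to total weight at most `1`, keeping the elements
of highest supply `s`: above any supply threshold, either nothing is lost or at least `1`
remains. -/
lemma exists_truncation {ι : Type*} (s : ι → ℕ) (x : ι → ℝ) (hx : ∀ j, 0 ≤ x j)
    (T : Finset ι) :
    ∃ y : ι → ℝ, (∀ j, 0 ≤ y j) ∧ (∀ j, j ∉ T → y j = 0) ∧ ∑ j ∈ T, y j ≤ 1 ∧
      ∀ π : ℕ, min 1 (∑ j ∈ T.filter (fun j => π ≤ s j), x j) ≤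
        ∑ j ∈ T.filter (fun j => π ≤ s j), y j := by
  induction T using Finset.induction_on_min_value s with
  | empty => exact ⟨0, by simp⟩
  | insert a T haT hmin ih =>
    obtain ⟨y, hy0, hyT, hy1, hy⟩ := ih
    have hcongr : ∀ U ⊆ T, ∀ r : ℝ, ∑ j ∈ U, Function.update y a r j = ∑ j ∈ U, y j := by
      intro U hU r
      refine Finset.sum_congr rfl fun j hj => Function.update_of_ne ?_ _ _
      rintro rfl
      exact haT (hU hj)
    refine ⟨Function.update y a (min (x a) (1 - ∑ j ∈ T, y j)), ?_, ?_, ?_, ?_⟩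
    · intro j
      by_cases h : j = a
      · subst h
        rw [Function.update_self]
        exact le_min (hx _) (by linarith)
      · rw [Function.update_of_ne h]
        exact hy0 j
    · intro j hj
      rw [Finset.mem_insert, not_or] at hj
      rw [Function.update_of_ne hj.1]
      exact hyT j hj.2
    · rw [Finset.sum_insert haT, Function.update_self, hcongr T subset_rfl]
      linarith [min_le_right (x a) (1 - ∑ j ∈ T, y j)]
    · intro π
      by_cases hπ : π ≤ s a
      · have hall : T.filter (fun j => π ≤ s j) = T :=
          Finset.filter_true_of_mem fun j hj => hπ.trans (hmin j hj)
        have hyπ := hy π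
        rw [hall] at hyπ
        rw [Finset.filter_insert, if_pos hπ, hall, Finset.sum_insert haT,
          Finset.sum_insert haT, Function.update_self, hcongr T subset_rfl]
        have hxa := hx a
        rcases min_cases (x a) (1 - ∑ j ∈ T, y j) with h | h <;>
          rcases min_cases 1 (∑ j ∈ T, x j) with h' | h' <;>
          rcases min_cases 1 (x a + ∑ j ∈ T, x j) with h'' | h'' <;> linarith
      · rw [Finset.filter_insert, if_neg hπ, hcongr _ (Finset.filter_subset _ _)]
        exact hy π

/-- A weight charged to the piece containing a given vertex is charged at most once. -/
lemma sum_charge_le {α : Type*} {R : Set α} [Fintype R] (a : α) {r : ℝ} (hr : 0 ≤ r) :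
    ∑ A : R, (if a = A.1 then r else 0) ≤ r := by
  by_cases h : a ∈ R
  · rw [Finset.sum_eq_single (⟨a, h⟩ : R)]
    · simp
    · rintro b - hb
      rw [if_neg]
      rintro rfl
      exact hb rfl
    · simp
  · rw [Finset.sum_eq_zero]
    · exact hr
    · rintro b -
      rw [if_neg]
      rintro rfl
      exact h b.2

/-- Each leaf edge is covered with weight at least `1`, and only by segments starting there. -/
lemma card_leaves_le {V ι : Type*} [Fintype V] [Fintype ι] {root : V} {parent : V → V}
    (u v : ι → V) (sup : ι → ℕ) (dem : {w : V // w ≠ root} → ℕ)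
    (x : ι → ℝ) (hx : ∀ j, 0 ≤ x j)
    (hfeas : ∀ e : {w : V // w ≠ root},
      1 ≤ ∑ j ∈ Finset.univ.filter (fun j => TreeCovers parent u v sup dem j e), x j) :
    ((Finset.univ.filter fun l : V => IsLeaf parent root l).card : ℝ) ≤ ∑ j, x j := by
  have h1 : ∀ l ∈ Finset.univ.filter (fun l : V => IsLeaf parent root l),
      (1 : ℝ) ≤ ∑ j ∈ Finset.univ.filter (fun j => u j = l), x j := by
    intro l hl
    have hl' := (Finset.mem_filter.1 hl).2
    refine (hfeas ⟨l, hl'.1⟩).trans (Finset.sum_le_sum_of_subset_of_nonneg ?_ fun j _ _ => hx j)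
    intro j hj
    simp only [Finset.mem_filter, Finset.mem_univ, true_and] at hj ⊢
    exact hl'.2 _ hj.1
  calc ((Finset.univ.filter fun l : V => IsLeaf parent root l).card : ℝ)
      = ∑ l ∈ Finset.univ.filter (fun l : V => IsLeaf parent root l), (1 : ℝ) := by simp
    _ ≤ ∑ l ∈ Finset.univ.filter (fun l : V => IsLeaf parent root l),
          ∑ j ∈ Finset.univ.filter (fun j => u j = l), x j := Finset.sum_le_sum h1
    _ ≤ ∑ l : V, ∑ j ∈ Finset.univ.filter (fun j => u j = l), x j :=
        Finset.sum_le_sum_of_subset_of_nonneg (Finset.subset_univ _)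
          fun _ _ _ => Finset.sum_nonneg fun j _ => hx j
    _ = ∑ j, x j := Finset.sum_fiberwise _ _ _

/-! ### The decomposition -/

/-- For every rooted PTC instance and every feasible fractional solution
`x` of its canonical LP relaxation, the edges of the tree can be partitioned into edge sets
of paths `E_1, …, E_p` with fractional solutions `x⁽¹⁾, …, x⁽ᵖ⁾` such that `x⁽ⁱ⁾`
fractionally covers every edge of `E_i` and `∑_i ∑_j x⁽ⁱ⁾_j ≤ 3·∑_j x_j`. -/
theorem ptc_fractional_path_decomposition (V ι : Type*) [Fintype V] [DecidableEq V]
    [Fintype ι]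
    (root : V) (parent : V → V)
    (hroot : parent root = root) (hreach : ∀ w : V, OnChain parent w root)
    (u v : ι → V) (hanc : ∀ j, OnChain parent (u j) (v j))
    (sup : ι → ℕ) (dem : {w : V // w ≠ root} → ℕ)
    (x : ι → ℝ) (hx : ∀ j, 0 ≤ x j)
    (hfeas : ∀ e : {w : V // w ≠ root},
      1 ≤ ∑ j ∈ Finset.univ.filter (fun j => TreeCovers parent u v sup dem j e), x j) :
    ∃ (p : ℕ) (P : Fin p → Set {w : V // w ≠ root}) (xs : Fin p → ι → ℝ),
      (∀ i, IsPathEdgeSet parent root (P i)) ∧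
      (Pairwise fun i i' => Disjoint (P i) (P i')) ∧
      (⋃ i, P i) = Set.univ ∧
      (∀ i j, 0 ≤ xs i j) ∧
      (∀ i, ∀ e ∈ P i,
        1 ≤ ∑ j ∈ Finset.univ.filter (fun j => TreeCovers parent u v sup dem j e), xs i j) ∧
      ∑ i, ∑ j, xs i j ≤ 3 * ∑ j, x j := by
  -- `κ` indexes the pieces by the sets of leaves below them.
  let Lf : V → Set V := leavesBelow parent root
  let κ := Set.range fun e : {w : V // w ≠ root} => leavesBelow parent root e.1
  let _ : Fintype κ := Fintype.ofFinite κ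
  -- The segments with both ends outside a piece that run through all of it.
  let C : κ → Finset ι := fun A => Finset.univ.filter fun j =>
    Lf (u j) ≠ A.1 ∧ ∀ f, f ≠ root → Lf f = A.1 →
      OnChain parent (u j) f ∧ ¬ OnChain parent (v j) f
  choose y hy0 hyC hy1 hy using fun A : κ => exists_truncation sup x hx (C A)
  let z : κ → ι → ℝ := fun A j =>
    (if Lf (u j) = A.1 then x j else 0) + (if Lf (v j) = A.1 then x j else 0) + y A j
  have hz0 : ∀ A j, 0 ≤ z A j := by
    intro A j
    have h1 := hx j
    have h2 := hy0 A j
    simp only [z]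
    split_ifs <;> linarith
  have hcov : ∀ A : κ, ∀ e : {w : V // w ≠ root}, Lf e.1 = A.1 →
      1 ≤ ∑ j ∈ Finset.univ.filter (fun j => TreeCovers parent u v sup dem j e), z A j := by
    intro A e heA
    set D := Finset.univ.filter (fun j => TreeCovers parent u v sup dem j e) with hD
    set F := (C A).filter (fun j => dem e ≤ sup j) with hF
    have hFD : F ⊆ D := by
      intro j hj
      simp only [hF, hD, C, Finset.mem_filter, Finset.mem_univ, true_and] at hj ⊢
      exact ⟨(hj.1.2 e.1 e.2 heA).1, (hj.1.2 e.1 e.2 heA).2, hj.2⟩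
    have hyF : ∑ j ∈ F, y A j ≤ ∑ j ∈ D, y A j :=
      Finset.sum_le_sum_of_subset_of_nonneg hFD fun j _ _ => hy0 A j
    have hmin := hy A (dem e)
    have hends : 0 ≤ ∑ j ∈ D, ((if Lf (u j) = A.1 then x j else 0) +
        (if Lf (v j) = A.1 then x j else 0)) := by
      refine Finset.sum_nonneg fun j _ => ?_
      have := hx j
      split_ifs <;> linarith
    have hsplit : ∑ j ∈ D, z A j = ∑ j ∈ D, ((if Lf (u j) = A.1 then x j else 0) +
        (if Lf (v j) = A.1 then x j else 0)) + ∑ j ∈ D, y A j := Finset.sum_add_distrib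
    rcases le_total 1 (∑ j ∈ F, x j) with h | h
    · rw [min_eq_left h] at hmin
      linarith
    · rw [min_eq_right h] at hmin
      have hxF : ∑ j ∈ F, x j = ∑ j ∈ D, if j ∈ F then x j else 0 := by
        rw [← Finset.sum_filter, Finset.filter_mem_eq_inter, Finset.inter_eq_right.2 hFD]
      have hle : ∑ j ∈ D, x j ≤ ∑ j ∈ D, (((if Lf (u j) = A.1 then x j else 0) +
          (if Lf (v j) = A.1 then x j else 0)) + if j ∈ F then x j else 0) := by
        refine Finset.sum_le_sum fun j hj => ?_
        have hxj := hx j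
        have hj' : TreeCovers parent u v sup dem j e := (Finset.mem_filter.1 hj).2
        by_cases hu : Lf (u j) = A.1
        · rw [if_pos hu]
          split_ifs <;> linarith
        by_cases hv : Lf (v j) = A.1
        · rw [if_pos hv]
          split_ifs <;> linarith
        have hjF : j ∈ F := by
          simp only [hF, C, Finset.mem_filter, Finset.mem_univ, true_and]
          refine ⟨⟨hu, fun f hf hfA => ?_⟩, hj'.2.2⟩
          exact covers_cases hroot hreach (hanc j) e.2 hj'.1 hj'.2.1
            (fun h => hu (h.trans heA)) (fun h => hv (h.trans heA)) hf (hfA.trans heA.symm)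
        rw [if_neg hu, if_neg hv, if_pos hjF]
        linarith
      rw [Finset.sum_add_distrib, ← hxF] at hle
      have hfe := hfeas e
      linarith
  have hysum : ∀ A : κ, ∑ j, y A j ≤
      if ∀ l, IsLeaf parent root l → leavesBelow parent root l ≠ A.1 then 1 else 0 := by
    intro A
    have htot : ∑ j, y A j = ∑ j ∈ C A, y A j :=
      (Finset.sum_subset (Finset.subset_univ _) fun j _ hj => hyC A j hj).symm
    rw [htot]
    split_ifs with h
    · exact hy1 A
    · -- A segment running through a piece with a leaf `l` would have to start at `l`.
      push Not at h
      obtain ⟨l, hl, hlA⟩ := h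
      have hempty : C A = ∅ := by
        refine Finset.filter_eq_empty_iff.2 ?_
        rintro j - ⟨h1, h2⟩
        apply h1
        rw [hl.2 _ (h2 l hl.1 hlA).1]
        exact hlA
      rw [hempty, Finset.sum_empty]
  have hcost : ∑ A : κ, ∑ j, z A j ≤ 3 * ∑ j, x j := by
    have hU : ∑ A : κ, ∑ j, (if Lf (u j) = A.1 then x j else 0) ≤ ∑ j, x j := by
      rw [Finset.sum_comm]
      exact Finset.sum_le_sum fun j _ => sum_charge_le _ (hx j)
    have hV : ∑ A : κ, ∑ j, (if Lf (v j) = A.1 then x j else 0) ≤ ∑ j, x j := by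
      rw [Finset.sum_comm]
      exact Finset.sum_le_sum fun j _ => sum_charge_le _ (hx j)
    have hY : ∑ A : κ, ∑ j, y A j ≤ ∑ j, x j := by
      refine (Finset.sum_le_sum fun A _ => hysum A).trans ?_
      rw [← Finset.sum_filter, Finset.sum_const, nsmul_eq_mul, mul_one]
      refine le_trans ?_ (card_leaves_le u v sup dem x hx hfeas)
      exact_mod_cast card_internal_le hroot hreach
    simp only [z, Finset.sum_add_distrib]
    linarith
  let φ := (Fintype.equivFin κ).symm
  refine ⟨Fintype.card κ, fun i => {e | Lf e.1 = (φ i).1}, fun i => z (φ i), ?_, ?_, ?_,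
    fun i j => hz0 _ j, fun i e he => hcov _ e he, ?_⟩
  · intro i
    obtain ⟨e, he⟩ := (φ i).2
    change IsPathEdgeSet parent root {f | Lf f.1 = (φ i).1}
    rw [← he]
    exact isPathEdgeSet_piece hroot hreach e.2
  · intro i i' hii
    refine Set.disjoint_left.2 fun e h1 h2 => hii (φ.injective (Subtype.ext ?_))
    exact h1.symm.trans h2
  · refine Set.eq_univ_of_forall fun e => Set.mem_iUnion.2 ⟨φ.symm ⟨Lf e.1, e, rfl⟩, ?_⟩
    simp
  · rw [Equiv.sum_comp φ fun A => ∑ j, z A j]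
    exact hcost
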